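/- arXiv:1902.07391 — 3 statements merged into one kernel-verified Lean document; each statement's English description precedes it below -/
import Mathlib

section
/- Let G be a group, K ≤ G a subgroup, and Y a set with a left K-action. Let φ: K\G → G be a section of the right-coset quotient. Then the map ψ: (G ×_K Y) × G → G × (K\G) × Y given by ψ([g,y], h) = (h·φ(Kg⁻¹h)⁻¹, Kg⁻¹h, (φ(Kg⁻¹h)h⁻¹g)·y) is well defined and is a G-equivariant bijection, where G acts on (G ×_K Y) × G diagonally by g₀·([g,y], h) = ([g₀g, y], g₀h), and on G × (K\G) × Y by left multiplication on the first factor only. -/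
/-- The balanced product `G ×_K Y`: the quotient of `G × Y` by the relation
`(g, y) ~ (g * k⁻¹, k • y)` for `k ∈ K`. -/
def balancedRel {G : Type*} [Group G] (K : Subgroup G) (Y : Type*) [MulAction K Y] :
    Setoid (G × Y) where
  r p q := ∃ k : K, q.1 = p.1 * (k : G)⁻¹ ∧ q.2 = k • p.2
  iseqv := by
    constructor
    · intro p
      exact ⟨1, by simp, by simp⟩
    · rintro p q ⟨k, h1, h2⟩
      exact ⟨k⁻¹, by simp [h1, mul_assoc], by simp [h2]⟩
    · rintro p q r ⟨k, h1, h2⟩ ⟨k', h1', h2'⟩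
      exact ⟨k' * k, by simp [h1', h1, mul_assoc], by simp [h2', h2, mul_smul]⟩

/-- The action of `g₀ ∈ G` on the balanced product `G ×_K Y`, `g₀ • [g, y] = [g₀ g, y]`. -/
def gAction {G : Type*} [Group G] (K : Subgroup G) (Y : Type*) [MulAction K Y] (g₀ : G) :
    Quotient (balancedRel K Y) → Quotient (balancedRel K Y) :=
  Quotient.lift (fun p => Quotient.mk (balancedRel K Y) (g₀ * p.1, p.2))
    (by
      rintro ⟨g, y⟩ ⟨g', y'⟩ ⟨k, h1, h2⟩
      dsimp only at h1 h2
      exact Quotient.sound ⟨k, by simp [h1, mul_assoc], h2⟩)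

section Cosets

open QuotientGroup (rightRel)

variable {G : Type*} [Group G] {K : Subgroup G} {φ : Quotient (rightRel K) → G}

theorem mk_rightRel_mul (k : K) (x : G) :
    Quotient.mk (rightRel K) (k * x) = Quotient.mk (rightRel K) x :=
  Quotient.sound <| QuotientGroup.rightRel_apply.mpr <| by simp

theorem section_mul_inv_mem (hφ : Function.RightInverse φ (Quotient.mk (rightRel K))) (x : G) :
    φ (Quotient.mk (rightRel K) x) * x⁻¹ ∈ K :=
  QuotientGroup.rightRel_apply.mp <| Quotient.exact (hφ (Quotient.mk (rightRel K) x)).symm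

/-- The element `φ(Kx) x⁻¹` of `K` carrying `x` to the representative of `Kx` chosen by the
section `φ`. With `x = g⁻¹h` it is the factor `φ(Kg⁻¹h) h⁻¹ g` acting on `Y`. -/
def sectionCorrection (hφ : Function.RightInverse φ (Quotient.mk (rightRel K))) (x : G) : K :=
  ⟨φ (Quotient.mk (rightRel K) x) * x⁻¹, section_mul_inv_mem hφ x⟩

variable (hφ : Function.RightInverse φ (Quotient.mk (rightRel K)))

theorem sectionCorrection_mul (k : K) (x : G) :
    sectionCorrection hφ (k * x) = sectionCorrection hφ x * k⁻¹ :=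
  Subtype.ext <| by simp [sectionCorrection, mk_rightRel_mul, mul_assoc]

theorem sectionCorrection_section (c : Quotient (rightRel K)) :
    sectionCorrection hφ (φ c) = 1 :=
  Subtype.ext <| by simp [sectionCorrection, hφ c]

theorem inv_section_eq_mul_inv_sectionCorrection (g : G) :
    (φ (Quotient.mk (rightRel K) g⁻¹))⁻¹ = g * (sectionCorrection hφ g⁻¹ : G)⁻¹ := by
  simp [sectionCorrection]

variable (Y : Type*) [MulAction K Y]

/-- A section `φ` of `G → K\G` identifies the set `G ×_K Y` with `(K\G) × Y`: every class has a
unique representative of the form `(φ(c)⁻¹, y)`. -/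
def balancedProductEquiv :
    Quotient (balancedRel K Y) ≃ Quotient (rightRel K) × Y where
  toFun := Quotient.lift
    (fun p ↦ (Quotient.mk (rightRel K) p.1⁻¹, sectionCorrection hφ p.1⁻¹ • p.2)) <| by
      rintro ⟨g, y⟩ ⟨_, _⟩ ⟨k, rfl, rfl⟩
      simp [mk_rightRel_mul, sectionCorrection_mul, smul_smul]
  invFun t := Quotient.mk (balancedRel K Y) ((φ t.1)⁻¹, t.2)
  left_inv := Quotient.ind fun p ↦ Eq.symm <| Quotient.sound
    ⟨sectionCorrection hφ p.1⁻¹, inv_section_eq_mul_inv_sectionCorrection hφ p.1, rfl⟩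
  right_inv := fun ⟨c, y⟩ ↦ by simp [hφ c, sectionCorrection_section]

theorem balancedProductEquiv_mk (g : G) (y : Y) :
    balancedProductEquiv hφ Y (Quotient.mk (balancedRel K Y) (g, y)) =
      (Quotient.mk (rightRel K) g⁻¹, sectionCorrection hφ g⁻¹ • y) :=
  rfl

end Cosets

section DiagonalAction

variable {G X Z : Type*} [Group G] [MulAction G X]

/-- For a `G`-set `X`, a bijection `e : X ≃ Z` and any `s : Z → G`, the product `X × G` with the
diagonal action is the free `G`-set `G × Z`. The pair `(x, h)` is first translated to
`(h⁻¹x, 1)`; the twist by `s` changes the basepoint of the free orbit over each `z : Z`. -/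
def diagonalTrivialization (e : X ≃ Z) (s : Z → G) : X × G ≃ G × Z where
  toFun p := (p.2 * (s (e (p.2⁻¹ • p.1)))⁻¹, e (p.2⁻¹ • p.1))
  invFun t := ((t.1 * s t.2) • e.symm t.2, t.1 * s t.2)
  left_inv p := by simp
  right_inv t := by simp only [inv_smul_smul, Equiv.apply_symm_apply, mul_inv_cancel_right]

theorem diagonalTrivialization_apply (e : X ≃ Z) (s : Z → G) (x : X) (h : G) :
    diagonalTrivialization e s (x, h) = (h * (s (e (h⁻¹ • x)))⁻¹, e (h⁻¹ • x)) :=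
  rfl

theorem diagonalTrivialization_smul_mul (e : X ≃ Z) (s : Z → G) (g : G) (x : X) (h : G) :
    diagonalTrivialization e s (g • x, g * h) =
      (g * (diagonalTrivialization e s (x, h)).1, (diagonalTrivialization e s (x, h)).2) := by
  simp [diagonalTrivialization_apply, mul_smul, mul_assoc]

end DiagonalAction

instance balancedProductMulAction {G : Type*} [Group G] (K : Subgroup G) (Y : Type*)
    [MulAction K Y] : MulAction G (Quotient (balancedRel K Y)) where
  smul := gAction K Y
  one_smul := Quotient.ind fun p ↦
    congrArg (fun g ↦ Quotient.mk (balancedRel K Y) (g, p.2)) (one_mul p.1)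
  mul_smul g₁ g₂ := Quotient.ind fun p ↦
    congrArg (fun g ↦ Quotient.mk (balancedRel K Y) (g, p.2)) (mul_assoc g₁ g₂ p.1)

theorem smul_mk_balancedRel {G : Type*} [Group G] (K : Subgroup G) {Y : Type*} [MulAction K Y]
    (g₀ g : G) (y : Y) :
    g₀ • Quotient.mk (balancedRel K Y) (g, y) = Quotient.mk (balancedRel K Y) (g₀ * g, y) :=
  rfl

/-- The map `ψ : (G ×_K Y) × G → G × (K\G) × Y` given by
`ψ([g,y], h) = (h·φ(Kg⁻¹h)⁻¹, Kg⁻¹h, (φ(Kg⁻¹h)h⁻¹g)·y)` is well defined and is a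
`G`-equivariant bijection, where `φ : K\G → G` is a section of the right-coset quotient. -/
theorem balanced_product_trivialization
    {G : Type*} [Group G] (K : Subgroup G) (Y : Type*) [MulAction K Y]
    (φ : Quotient (QuotientGroup.rightRel K) → G)
    (hφ : ∀ g : G,
      Quotient.mk (QuotientGroup.rightRel K) (φ (Quotient.mk (QuotientGroup.rightRel K) g)) =
        Quotient.mk (QuotientGroup.rightRel K) g) :
    ∃ ψ : Quotient (balancedRel K Y) × G → G × Quotient (QuotientGroup.rightRel K) × Y,
      (∀ (g : G) (y : Y) (h : G),
        ∃ hk : φ (Quotient.mk (QuotientGroup.rightRel K) (g⁻¹ * h)) * h⁻¹ * g ∈ K,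
          ψ (Quotient.mk (balancedRel K Y) (g, y), h) =
            (h * (φ (Quotient.mk (QuotientGroup.rightRel K) (g⁻¹ * h)))⁻¹,
             Quotient.mk (QuotientGroup.rightRel K) (g⁻¹ * h),
             (⟨φ (Quotient.mk (QuotientGroup.rightRel K) (g⁻¹ * h)) * h⁻¹ * g, hk⟩ : K) • y)) ∧
      Function.Bijective ψ ∧
      (∀ (g₀ : G) (q : Quotient (balancedRel K Y)) (h : G),
        ψ (gAction K Y g₀ q, g₀ * h) =
          (g₀ * (ψ (q, h)).1, (ψ (q, h)).2.1, (ψ (q, h)).2.2)) := by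
  have hsec : Function.RightInverse φ (Quotient.mk (QuotientGroup.rightRel K)) := Quotient.ind hφ
  let ψ := diagonalTrivialization (balancedProductEquiv hsec Y) fun z ↦ φ z.1
  refine ⟨ψ, fun g y h ↦ ?_, ψ.bijective,
    diagonalTrivialization_smul_mul (balancedProductEquiv hsec Y) fun z ↦ φ z.1⟩
  have hcorr : (sectionCorrection hsec (g⁻¹ * h) : G) =
      φ (Quotient.mk (QuotientGroup.rightRel K) (g⁻¹ * h)) * h⁻¹ * g := by
    simp [sectionCorrection, mul_assoc]
  simp only [← hcorr, Subtype.coe_eta]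
  refine ⟨(sectionCorrection hsec (g⁻¹ * h)).2, ?_⟩
  simp only [ψ, diagonalTrivialization_apply, smul_mk_balancedRel, balancedProductEquiv_mk,
    mul_inv_rev, inv_inv]
end

section
/- Let G be a group equipped with a left-invariant metric d (i.e. d(ag, ag') = d(g, g') for all a, g, g' ∈ G), let K ≤ G be a subgroup of finite diameter diam(K) = sup{d(k, k') : k, k' ∈ K} (for instance a compact subgroup when d is continuous and proper), and let φ: K\G → G be a section of the right-coset quotient. Define ψ₁: G × G → G by ψ₁(g, h) = h·φ(Kg⁻¹h)⁻¹. Then for all g, g', h, h' ∈ G: d(g, g') − 2·diam(K) ≤ d(ψ₁(g, h), ψ₁(g', h')) ≤ d(g, g') + 2·diam(K). -/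
section LeftInvariant

variable {G : Type*} [Group G] [PseudoMetricSpace G] [IsIsometricSMul G G]

theorem dist_le_diam_of_inv_mul_mem {s : Set G} (hs : Bornology.IsBounded s) (hone : 1 ∈ s)
    {x y : G} (hxy : x⁻¹ * y ∈ s) : dist x y ≤ Metric.diam s :=
  calc
    dist x y = dist 1 (x⁻¹ * y) := by rw [← dist_mul_left x⁻¹ x y, inv_mul_cancel]
    _ ≤ Metric.diam s := Metric.dist_le_diam_of_mem hs hone hxy

end LeftInvariant

/-- The map `ψ₁(g, h) = h·φ(Kg⁻¹h)⁻¹` attached to a map `φ : K\G → G`: when `φ` is a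
section, it moves `g` within its coset `gK`. The space `K\G` of right cosets `Kg` is encoded as the
quotient by `QuotientGroup.rightRel K`, and the definition does not require `φ` to be a section. -/
def psi1 {G : Type*} [Group G] {K : Subgroup G}
    (φ : Quotient (QuotientGroup.rightRel K) → G) (g h : G) : G :=
  h * (φ (Quotient.mk _ (g⁻¹ * h)))⁻¹

section RightCosetSection

variable {G : Type*} [Group G] {K : Subgroup G} {φ : Quotient (QuotientGroup.rightRel K) → G}

theorem inv_mul_psi1_mem (hφ : Function.RightInverse φ (Quotient.mk _)) (g h : G) :
    g⁻¹ * psi1 φ g h ∈ K := by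
  rw [psi1, ← mul_assoc]
  exact QuotientGroup.rightRel_apply.mp (Quotient.exact (hφ _))

variable [PseudoMetricSpace G] [IsIsometricSMul G G]

theorem dist_psi1_le_diam (hK : Bornology.IsBounded (K : Set G))
    (hφ : Function.RightInverse φ (Quotient.mk _)) (g h : G) :
    dist g (psi1 φ g h) ≤ Metric.diam (K : Set G) :=
  dist_le_diam_of_inv_mul_mem hK K.one_mem (inv_mul_psi1_mem hφ g h)

theorem psi1_distance_estimate_general (hK : Bornology.IsBounded (K : Set G))
    (hφ : Function.RightInverse φ (Quotient.mk _)) (g g' h h' : G) :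
    dist g g' - 2 * Metric.diam (K : Set G) ≤ dist (psi1 φ g h) (psi1 φ g' h') ∧
      dist (psi1 φ g h) (psi1 φ g' h') ≤ dist g g' + 2 * Metric.diam (K : Set G) := by
  have habs : |dist g g' - dist (psi1 φ g h) (psi1 φ g' h')| ≤ 2 * Metric.diam (K : Set G) :=
    calc
      |dist g g' - dist (psi1 φ g h) (psi1 φ g' h')|
          ≤ dist g (psi1 φ g h) + dist g' (psi1 φ g' h') := dist_dist_dist_le _ _ _ _
      _ ≤ Metric.diam (K : Set G) + Metric.diam (K : Set G) :=
        add_le_add (dist_psi1_le_diam hK hφ g h) (dist_psi1_le_diam hK hφ g' h')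
      _ = 2 * Metric.diam (K : Set G) := (two_mul _).symm
  obtain ⟨hlower, hupper⟩ := abs_sub_le_iff.mp habs
  exact ⟨sub_le_comm.mp hlower, sub_le_iff_le_add'.mp hupper⟩

end RightCosetSection

/-- Let `G` be a group with a left-invariant metric and `K ≤ G` a subgroup of finite
diameter, `φ : K\G → G` a section of the right-coset quotient, and
`ψ₁(g, h) = h·φ(Kg⁻¹h)⁻¹`.  Then for all `g, g', h, h'`:
`d(g, g') − 2·diam K ≤ d(ψ₁(g,h), ψ₁(g',h')) ≤ d(g, g') + 2·diam K`. -/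
theorem psi1_distance_estimate
    {G : Type*} [Group G] [MetricSpace G]
    (hinv : ∀ a g g' : G, dist (a * g) (a * g') = dist g g')
    (K : Subgroup G) (hK : Bornology.IsBounded (K : Set G))
    (φ : Quotient (QuotientGroup.rightRel K) → G)
    (hφ : ∀ g : G,
      Quotient.mk (QuotientGroup.rightRel K) (φ (Quotient.mk (QuotientGroup.rightRel K) g)) =
        Quotient.mk (QuotientGroup.rightRel K) g)
    (ψ₁ : G → G → G)
    (hψ₁ : ∀ g h : G, ψ₁ g h = h * (φ (Quotient.mk (QuotientGroup.rightRel K) (g⁻¹ * h)))⁻¹) :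
    ∀ g g' h h' : G,
      dist g g' - 2 * Metric.diam (K : Set G) ≤ dist (ψ₁ g h) (ψ₁ g' h') ∧
      dist (ψ₁ g h) (ψ₁ g' h') ≤ dist g g' + 2 * Metric.diam (K : Set G) := by
  have : IsIsometricSMul G G := ⟨fun a ↦ Isometry.of_dist_eq (hinv a)⟩
  exact (funext₂ hψ₁ : ψ₁ = psi1 φ) ▸ psi1_distance_estimate_general hK (Quotient.ind hφ)
end

section
/- For s ∈ (0, 1] define b_s: ℝ → ℝ by b_s(x) = x / (|x|^{1/s} + 1)^s, and define b: ℝ → ℝ by b(x) = x for |x| < 1 and b(x) = x/|x| for |x| ≥ 1 (the clamp of x to [−1, 1]). Then sup_{x ∈ ℝ} |b_s(x) − b(x)| tends to 0 as s tends to 0 from the right. -/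
/-!
For `p = 1 / s`, the denominator `(‖x‖ ^ p + 1) ^ s` is the `ℓᵖ` norm of `(‖x‖, 1)`, whereas the
clamp is `x` divided by the `ℓ^∞` norm `max ‖x‖ 1`. These two norms on the plane agree up to the
factor `2 ^ (1 / p)`, so the two quotients differ by at most `1 - 2 ^ (-s)`, uniformly in `x`.
-/

open Filter Topology

section RpowAddRpow

variable {a b s : ℝ}

theorem max_le_rpow_add_rpow_rpow (ha : 0 ≤ a) (hb : 0 ≤ b) (hs : 0 < s) :
    max a b ≤ (a ^ (1 / s) + b ^ (1 / s)) ^ s := by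
  rw [one_div]
  have ha' : 0 ≤ a ^ s⁻¹ := Real.rpow_nonneg ha _
  have hb' : 0 ≤ b ^ s⁻¹ := Real.rpow_nonneg hb _
  refine max_le ?_ ?_
  · calc
      a = (a ^ s⁻¹) ^ s := (Real.rpow_inv_rpow ha hs.ne').symm
      _ ≤ (a ^ s⁻¹ + b ^ s⁻¹) ^ s := by gcongr; exact le_add_of_nonneg_right hb'
  · calc
      b = (b ^ s⁻¹) ^ s := (Real.rpow_inv_rpow hb hs.ne').symm
      _ ≤ (a ^ s⁻¹ + b ^ s⁻¹) ^ s := by gcongr; exact le_add_of_nonneg_left ha'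

theorem rpow_add_rpow_rpow_le_two_rpow_mul_max (ha : 0 ≤ a) (hb : 0 ≤ b) (hs : 0 < s) :
    (a ^ (1 / s) + b ^ (1 / s)) ^ s ≤ 2 ^ s * max a b := by
  have hmax : 0 ≤ max a b := ha.trans (le_max_left a b)
  calc
    (a ^ (1 / s) + b ^ (1 / s)) ^ s
      ≤ (max a b ^ (1 / s) + max a b ^ (1 / s)) ^ s := by
        gcongr
        exacts [le_max_left a b, le_max_right a b]
    _ = 2 ^ s * max a b := by
        rw [← two_mul, Real.mul_rpow zero_le_two (Real.rpow_nonneg hmax _), one_div,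
          Real.rpow_inv_rpow hmax hs.ne']

end RpowAddRpow

section NormedSpace

variable {E : Type*} [SeminormedAddCommGroup E] [NormedSpace ℝ E]

theorem norm_inv_smul_sub_inv_smul_le {x : E} {m D K : ℝ} (hm : 0 < m) (hxm : ‖x‖ ≤ m)
    (hmD : m ≤ D) (hDK : D ≤ K * m) : ‖D⁻¹ • x - m⁻¹ • x‖ ≤ 1 - K⁻¹ := by
  have hD : 0 < D := hm.trans_le hmD
  have hK : 0 < K := pos_of_mul_pos_left (hD.trans_le hDK) hm.le
  have hinv : D⁻¹ ≤ m⁻¹ := inv_anti₀ hm hmD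
  have hratio : K⁻¹ ≤ m / D := by
    rwa [inv_eq_one_div, div_le_div_iff₀ hK hD, one_mul, mul_comm m]
  calc
    ‖D⁻¹ • x - m⁻¹ • x‖ = (m⁻¹ - D⁻¹) * ‖x‖ := by
      rw [← sub_smul, norm_smul, Real.norm_eq_abs, abs_sub_comm,
        abs_of_nonneg (sub_nonneg.2 hinv)]
    _ ≤ (m⁻¹ - D⁻¹) * m := mul_le_mul_of_nonneg_left hxm (sub_nonneg.2 hinv)
    _ = 1 - m / D := by field_simp
    _ ≤ 1 - K⁻¹ := sub_le_sub_left hratio 1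

theorem norm_rpow_inv_smul_sub_max_inv_smul_le {s : ℝ} (hs : 0 < s) (x : E) :
    ‖((‖x‖ ^ (1 / s) + 1) ^ s)⁻¹ • x - (max ‖x‖ 1)⁻¹ • x‖ ≤ 1 - (2 ^ s)⁻¹ := by
  have hlower := max_le_rpow_add_rpow_rpow (norm_nonneg x) zero_le_one hs
  have hupper := rpow_add_rpow_rpow_le_two_rpow_mul_max (norm_nonneg x) zero_le_one hs
  rw [Real.one_rpow] at hlower hupper
  exact norm_inv_smul_sub_inv_smul_le (by positivity) (le_max_left _ _) hlower hupper

theorem sup_dist_bs_to_clamp_tendsto_zero_general :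
    Tendsto (fun s : ℝ => ⨆ x : E, ‖((‖x‖ ^ (1 / s) + 1) ^ s)⁻¹ • x - (max ‖x‖ 1)⁻¹ • x‖)
      (𝓝[>] 0) (𝓝 0) := by
  have hbound : Tendsto (fun s : ℝ => 1 - ((2 : ℝ) ^ s)⁻¹) (𝓝[>] 0) (𝓝 0) := by
    have hcont : Continuous fun s : ℝ => 1 - ((2 : ℝ) ^ s)⁻¹ :=
      continuous_const.sub ((Real.continuous_const_rpow two_ne_zero).inv₀ fun s => by positivity)
    exact (hcont.tendsto' 0 0 (by norm_num)).mono_left nhdsWithin_le_nhds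
  refine squeeze_zero' (Eventually.of_forall fun s => Real.iSup_nonneg fun x => norm_nonneg _)
    ?_ hbound
  filter_upwards [self_mem_nhdsWithin] with s hs
  exact ciSup_le fun x => norm_rpow_inv_smul_sub_max_inv_smul_le hs x

end NormedSpace

theorem max_neg_one_min_one_eq_div_max_abs {K : Type*} [Field K] [LinearOrder K]
    [IsStrictOrderedRing K] (x : K) : max (-1) (min 1 x) = x / max |x| 1 := by
  rcases le_total |x| 1 with hx | hx
  · rw [max_eq_right hx, div_one, min_eq_right (abs_le.1 hx).2, max_eq_right (abs_le.1 hx).1]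
  · rw [max_eq_left hx]
    rcases le_abs'.1 hx with hneg | hpos
    · have hx0 : x < 0 := hneg.trans_lt neg_one_lt_zero
      rw [abs_of_neg hx0, div_neg, div_self hx0.ne, min_eq_right (hx0.le.trans zero_le_one),
        max_eq_left hneg]
    · have hx0 : 0 < x := zero_lt_one.trans_le hpos
      rw [abs_of_pos hx0, div_self hx0.ne', min_eq_left hpos,
        max_eq_right (neg_le_self zero_le_one)]

/-- For `s ∈ (0, 1]`, let `b_s(x) = x / (|x|^{1/s} + 1)^s`, and let `b` be the clamp of
`x` to `[−1, 1]` (i.e. `b(x) = x` for `|x| < 1` and `b(x) = x/|x|` for `|x| ≥ 1`).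
Then `sup_{x ∈ ℝ} |b_s(x) − b(x)| → 0` as `s → 0⁺`. -/
theorem sup_dist_bs_to_clamp_tendsto_zero :
    Filter.Tendsto
      (fun s : ℝ => ⨆ x : ℝ, |x / (|x| ^ (1 / s) + 1) ^ s - max (-1) (min 1 x)|)
      (nhdsWithin 0 (Set.Ioi 0)) (nhds 0) := by
  simpa only [max_neg_one_min_one_eq_div_max_abs, div_eq_inv_mul _ (max _ _),
    div_eq_inv_mul _ (_ ^ _), smul_eq_mul, Real.norm_eq_abs] using
    sup_dist_bs_to_clamp_tendsto_zero_general (E := ℝ)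
end
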